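/- arXiv:2504.00116 — 2 statements merged into one kernel-verified Lean document; each statement's English description precedes it below -/
import Mathlib

section
/- There are no integers x ≥ 9 and y ≥ 0 with 10^x - y² = 31. -/
theorem no_solution_c31 :
    ∀ x : ℕ, 9 ≤ x → ∀ y : ℤ, 0 ≤ y → (10 : ℤ)^x - y^2 ≠ 31 := by
  intro x _ y _ h
  -- reduce modulo 9: `10 ^ x = 1`, so `y ^ 2 = 6`, which is not a square
  have h9 : ((10 : ZMod 9))^x - (y : ZMod 9)^2 = 31 := by
    exact_mod_cast congrArg (Int.cast : ℤ → ZMod 9) h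
  have h10 : (10 : ZMod 9) = 1 := by decide
  rw [h10, one_pow] at h9
  have key : ∀ z : ZMod 9, 1 - z^2 ≠ 31 := by decide
  exact key _ h9
end

section
/- For every integer c with 0 ≤ c ≤ 2000, if c = 10^x - y² for some integers x ≥ 0, y ≥ 0, then c = 10^x' - y'² for some integers 0 ≤ x' ≤ 7 and y' ≥ 0. -/
/-- Pairs `(x, y)` with `x ≤ 7` whose differences `10^x - y^2` exhaust `T(7)`. -/
def wit : List (ℕ × ℕ) := [(0, 1), (0, 0), (1, 2), (1, 1), (1, 0), (2, 9), (2, 8), (3, 31), (2, 7), (2, 6), (2, 5), (2, 4), (2, 3), (2, 2), (2, 1), (2, 0), (5, 316), (3, 29), (4, 99), (3, 28), (3, 27), (3, 26), (3, 25), (4, 98), (3, 24), (3, 23), (3, 22), (3, 21), (4, 97), (3, 20), (3, 19), (3, 18), (3, 17), (3, 16), (3, 15), (4, 96), (3, 14), (3, 13), (3, 12), (3, 11), (3, 10), (3, 9), (3, 8), (3, 7), (3, 6), (3, 5), (3, 4), (3, 3), (3, 2), (3, 1), (3, 0), (4, 94), (4, 93), (5, 314), (4, 92), (4, 91), (7,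 3162), (4, 90), (6, 999)]

/-- Moduli dividing `10^9`, with the bit mask of their squares. -/
def tenMods : List (ℕ × ℕ) := [(16, 531), (625, 80845922981814107517763971245834669652703868238402875709161847097143995508335396515664990433938143384676404986021443258162805552304302344275835061823781024033670493999783389382660300819027)]

/-- Moduli dividing `10^84 - 1`, with the bit mask of their squares. -/
def oddMods : List (ℕ × ℕ) := [(3, 3), (7, 23), (9, 147), (11, 571), (13, 5659), (27, 38348435), (29, 332473075), (37, 96068509339), (43, 3678700564051), (49, 97518889569047), (101, 1550432784880709368503235994227), (127, 30790515292689894969866990722818747159), (239, 7065734077645836540429506696338911894775431419613439055992324412120959)]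

theorem wit_le : (wit.all fun p => decide (p.1 ≤ 7)) = true := by decide +kernel

theorem tenMods_ok : (tenMods.all fun p => decide (0 < p.1) && (10 ^ 9 % p.1 == 0) &&
    (List.range p.1).all fun y => Nat.testBit p.2 (y * y % p.1)) = true := by decide +kernel

theorem oddMods_ok : (oddMods.all fun p => decide (0 < p.1) && (10 ^ 84 % p.1 == 1 % p.1) &&
    (List.range p.1).all fun y => Nat.testBit p.2 (y * y % p.1)) = true := by decide +kernel

theorem main_check : ((List.range 2001).all fun c =>
    (wit.any fun p => 10 ^ p.1 == p.2 ^ 2 + c) ||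
    (tenMods.any fun p => !Nat.testBit p.2 ((p.1 * 2001 - c) % p.1)) ||
    (List.range 42).all fun r => oddMods.any fun p =>
      !Nat.testBit p.2 ((10 ^ (2 * r + 1) + p.1 * 2001 - c) % p.1)) = true := by decide +kernel

theorem mask_sq (m k a y c X : ℕ) (hm : 0 < m) (hc : c ≤ 2000)
    (hk : ∀ y < m, Nat.testBit k (y * y % m) = true)
    (hX : X ≡ a [MOD m]) (h : X = y ^ 2 + c) :
    Nat.testBit k ((a + m * 2001 - c) % m) = true := by
  have h1 := hk (y % m) (Nat.mod_lt _ hm)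
  rw [← Nat.mul_mod] at h1
  have hle : c ≤ a + m * 2001 := by nlinarith
  have h2 : (a + m * 2001 - c) ≡ y * y [MOD m] := by
    apply Nat.ModEq.add_right_cancel' c
    rw [Nat.sub_add_cancel hle]
    have h3 : a + m * 2001 ≡ a [MOD m] := by simp [Nat.ModEq]
    have h4 : X = y * y + c := by rw [h]; ring
    exact h3.trans (hX.symm.trans (h4 ▸ Nat.ModEq.refl _))
  rw [h2]
  exact h1

theorem odd_case (c y x : ℕ) (hc : c ≤ 2000) (hx : 9 ≤ x) (ho : x % 2 = 1)
    (h : 10 ^ x = y ^ 2 + c) : ∃ p ∈ wit, 10 ^ p.1 = p.2 ^ 2 + c := by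
  have hm := List.all_eq_true.1 main_check c (List.mem_range.2 (by omega))
  rw [Bool.or_eq_true, Bool.or_eq_true] at hm
  rcases hm with (hm | hm) | hm
  · obtain ⟨p, hp, hq⟩ := List.any_eq_true.1 hm
    exact ⟨p, hp, by simpa using hq⟩
  · exfalso
    obtain ⟨p, hp, hq⟩ := List.any_eq_true.1 hm
    have hk := List.all_eq_true.1 tenMods_ok p hp
    rw [Bool.and_eq_true, Bool.and_eq_true, List.all_eq_true] at hk
    obtain ⟨⟨h0, h1⟩, h2⟩ := hk
    have hd : p.1 ∣ 10 ^ x :=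
      (Nat.dvd_of_mod_eq_zero (eq_of_beq h1)).trans (pow_dvd_pow 10 hx)
    have := mask_sq p.1 p.2 0 y c (10 ^ x) (of_decide_eq_true h0) hc
      (fun y hy => h2 y (List.mem_range.2 hy)) ((Nat.modEq_zero_iff_dvd).2 hd) h
    rw [Nat.zero_add] at this
    rw [this] at hq
    cases hq
  · exfalso
    have hr := List.all_eq_true.1 hm ((x % 84) / 2) (List.mem_range.2 (by omega))
    obtain ⟨p, hp, hq⟩ := List.any_eq_true.1 hr
    have hk := List.all_eq_true.1 oddMods_ok p hp
    rw [Bool.and_eq_true, Bool.and_eq_true, List.all_eq_true] at hk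
    obtain ⟨⟨h0, h1⟩, h2⟩ := hk
    have he : 2 * ((x % 84) / 2) + 1 = x % 84 := by omega
    rw [he] at hq
    have h3 : 10 ^ 84 ≡ 1 [MOD p.1] := eq_of_beq h1
    have h4 : 10 ^ x ≡ 10 ^ (x % 84) [MOD p.1] := by
      have h5 := ((h3.pow (x / 84)).mul_right (10 ^ (x % 84)))
      rwa [← pow_mul, ← pow_add, Nat.div_add_mod, one_pow, one_mul] at h5
    have := mask_sq p.1 p.2 _ y c (10 ^ x) (of_decide_eq_true h0) hc
      (fun y hy => h2 y (List.mem_range.2 hy)) h4 h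
    rw [this] at hq
    cases hq

theorem A051221_complete (c : ℤ) (hc0 : 0 ≤ c) (hc : c ≤ 2000)
    (h : ∃ (x : ℕ) (y : ℤ), 0 ≤ y ∧ c = (10 : ℤ)^x - y^2) :
    ∃ (x' : ℕ) (y' : ℤ), x' ≤ 7 ∧ 0 ≤ y' ∧ c = (10 : ℤ)^x' - y'^2 := by
  obtain ⟨x, y, hy, h⟩ := h
  by_cases hx : x ≤ 7
  · exact ⟨x, y, hx, hy, h⟩
  rcases Nat.mod_two_eq_zero_or_one x with he | ho
  · obtain ⟨k, rfl⟩ : ∃ k, x = 2 * k := ⟨x / 2, by omega⟩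
    have hk : (10 : ℤ) ^ 4 ≤ 10 ^ k := pow_le_pow_right₀ (by norm_num) (by omega)
    rw [mul_comm, pow_mul] at h
    generalize (10 : ℤ) ^ k = z at h hk
    have hyz : y = z := by
      rcases lt_trichotomy y z with hlt | heq | hgt
      · have : y + 1 ≤ z := hlt
        nlinarith
      · exact heq
      · nlinarith
    exact ⟨0, 1, by norm_num, by norm_num, by rw [h, hyz]; ring⟩
  · lift c to ℕ using hc0
    lift y to ℕ using hy
    have hn : 10 ^ x = y ^ 2 + c := by
      have : (10 : ℤ) ^ x = (y : ℤ) ^ 2 + c := by rw [h]; ring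
      exact_mod_cast this
    obtain ⟨p, hp, hq⟩ := odd_case c y x (by omega) (by omega) ho hn
    have hle := of_decide_eq_true (List.all_eq_true.1 wit_le p hp)
    refine ⟨p.1, p.2, hle, by positivity, ?_⟩
    have : (10 : ℤ) ^ p.1 = (p.2 : ℤ) ^ 2 + c := by exact_mod_cast hq
    rw [this]; ring
end
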